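/- (Uniqueness of bridge functions, Lemma B.2.) Assume W-completeness and positivity. If (h₂₂, h₂₁) and (h₂₂′, h₂₁′) are two pairs of real-valued functions each satisfying the observed bridge equations, then h₂₂(ȳ₂, w̄₂, ā₂) = h₂₂′(ȳ₂, w̄₂, ā₂) and h₂₁(ȳ₂, w₁, ā₂) = h₂₁′(ȳ₂, w₁, ā₂) for all arguments. -/

import Mathlib

open MeasureTheory

noncomputable def pr {Ω : Type*} [MeasurableSpace Ω] (P : Measure Ω) (E : Set Ω) : ℝ :=
  (P E).toReal

/-- Conditional probability `P(E | C)` as a real number. -/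
noncomputable def cpr {Ω : Type*} [MeasurableSpace Ω] (P : Measure Ω) (E C : Set Ω) : ℝ :=
  pr P (E ∩ C) / pr P C

/-! Both bridge equations are linear in the unknown bridge function, and W-completeness says exactly
that the corresponding linear operators have trivial kernel. The first equation therefore determines
`h22`; once `h22` is known, the left-hand side of the second is known too, and that equation
determines `h21`. -/

theorem eq_of_forall_sum_mul_eq {R Z W : Type*} [NonUnitalNonAssocRing R] [Fintype W]
    {k : Z → W → R} (hk : ∀ g : W → R, (∀ z, ∑ w, g w * k z w = 0) → ∀ w, g w = 0)
    {g g' : W → R} (h : ∀ z, ∑ w, g w * k z w = ∑ w, g' w * k z w) : g = g' := by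
  refine funext fun w => sub_eq_zero.mp (hk (fun w => g w - g' w) (fun z => ?_) w)
  simp only [sub_mul, Finset.sum_sub_distrib, h z, sub_self]

section Bridge

variable {Ω : Type*} [MeasurableSpace Ω] (P : Measure Ω)
  {Yt A1t A2t Z1t Z2t W1t W2t : Type*} [Fintype W1t] [Fintype W2t]
  (Y0 Y1 Y2 : Ω → Yt) (A1 : Ω → A1t) (A2 : Ω → A2t) (Z1 : Ω → Z1t) (Z2 : Ω → Z2t)
  (W1 : Ω → W1t) (W2 : Ω → W2t)

/-- W-completeness: within each stratum of outcome and treatment history, only the zero function of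
the outcome proxies has zero conditional mean at every value of the treatment proxies. Since `cpr`
vanishes when the conditioning event is null, only strata of positive probability constrain `g`. -/
structure IsWComplete : Prop where
  two_stage : ∀ (g : W1t × W2t → ℝ) (y0 y1 : Yt) (a1 : A1t) (a2 : A2t),
    (∀ (z1 : Z1t) (z2 : Z2t),
      ∑ w1 : W1t, ∑ w2 : W2t, g (w1, w2) *
        cpr P {ω | W1 ω = w1 ∧ W2 ω = w2}
          {ω | Y0 ω = y0 ∧ Y1 ω = y1 ∧ Z1 ω = z1 ∧ Z2 ω = z2 ∧ A1 ω = a1 ∧ A2 ω = a2} = 0) →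
    ∀ w, g w = 0
  one_stage : ∀ (g : W1t → ℝ) (y0 : Yt) (a1 : A1t),
    (∀ z1 : Z1t,
      ∑ w1 : W1t, g w1 *
        cpr P {ω | W1 ω = w1} {ω | Y0 ω = y0 ∧ Z1 ω = z1 ∧ A1 ω = a1} = 0) →
    ∀ w1, g w1 = 0

/-- The observed bridge equations for a pair `(h22, h21)`. By the convention `cpr P E C = 0` for
null `C`, `outcome_eq` reads `0 = 0` on a null stratum `(y0, y1, z1, z2, a1, a2)`, and so does
`recursion_eq` on a null stratum `(y0, z1, a1)`. -/
structure IsBridgePair (h22 : Yt → Yt → Yt → W1t → W2t → A1t → A2t → ℝ)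
    (h21 : Yt → Yt → Yt → W1t → A1t → A2t → ℝ) : Prop where
  outcome_eq : ∀ (y0 y1 y2 : Yt) (z1 : Z1t) (z2 : Z2t) (a1 : A1t) (a2 : A2t),
    cpr P {ω | Y2 ω = y2}
      {ω | Y0 ω = y0 ∧ Y1 ω = y1 ∧ Z1 ω = z1 ∧ Z2 ω = z2 ∧ A1 ω = a1 ∧ A2 ω = a2}
    = ∑ w1 : W1t, ∑ w2 : W2t, h22 y0 y1 y2 w1 w2 a1 a2 *
        cpr P {ω | W1 ω = w1 ∧ W2 ω = w2}
          {ω | Y0 ω = y0 ∧ Y1 ω = y1 ∧ A1 ω = a1 ∧ A2 ω = a2 ∧ Z1 ω = z1 ∧ Z2 ω = z2}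
  recursion_eq : ∀ (y0 y1 y2 : Yt) (z1 : Z1t) (a1 : A1t) (a2 : A2t),
    ∑ w1 : W1t, ∑ w2 : W2t, h22 y0 y1 y2 w1 w2 a1 a2 *
        cpr P {ω | Y1 ω = y1} {ω | Y0 ω = y0 ∧ Z1 ω = z1 ∧ A1 ω = a1} *
        cpr P {ω | W1 ω = w1 ∧ W2 ω = w2}
          {ω | Y0 ω = y0 ∧ Y1 ω = y1 ∧ A1 ω = a1 ∧ Z1 ω = z1}
    = ∑ w1 : W1t, h21 y0 y1 y2 w1 a1 a2 *
        cpr P {ω | W1 ω = w1} {ω | Y0 ω = y0 ∧ A1 ω = a1 ∧ Z1 ω = z1}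

variable {P Y0 Y1 Y2 A1 A2 Z1 Z2 W1 W2}

namespace IsWComplete

theorem eq_of_two_stage_sum_eq (hW : IsWComplete P Y0 Y1 A1 A2 Z1 Z2 W1 W2)
    {g g' : W1t × W2t → ℝ} (y0 y1 : Yt) (a1 : A1t) (a2 : A2t)
    (h : ∀ (z1 : Z1t) (z2 : Z2t),
      ∑ w1 : W1t, ∑ w2 : W2t, g (w1, w2) * cpr P {ω | W1 ω = w1 ∧ W2 ω = w2}
        {ω | Y0 ω = y0 ∧ Y1 ω = y1 ∧ Z1 ω = z1 ∧ Z2 ω = z2 ∧ A1 ω = a1 ∧ A2 ω = a2}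
      = ∑ w1 : W1t, ∑ w2 : W2t, g' (w1, w2) * cpr P {ω | W1 ω = w1 ∧ W2 ω = w2}
        {ω | Y0 ω = y0 ∧ Y1 ω = y1 ∧ Z1 ω = z1 ∧ Z2 ω = z2 ∧ A1 ω = a1 ∧ A2 ω = a2}) :
    g = g' := by
  refine eq_of_forall_sum_mul_eq (Z := Z1t × Z2t)
    (k := fun z w => cpr P {ω | W1 ω = w.1 ∧ W2 ω = w.2}
      {ω | Y0 ω = y0 ∧ Y1 ω = y1 ∧ Z1 ω = z.1 ∧ Z2 ω = z.2 ∧ A1 ω = a1 ∧ A2 ω = a2})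
    (fun f hf => hW.two_stage f y0 y1 a1 a2 fun z1 z2 => ?_) fun z => ?_
  · simpa only [Fintype.sum_prod_type] using hf (z1, z2)
  · simpa only [Fintype.sum_prod_type] using h z.1 z.2

theorem eq_of_one_stage_sum_eq (hW : IsWComplete P Y0 Y1 A1 A2 Z1 Z2 W1 W2)
    {g g' : W1t → ℝ} (y0 : Yt) (a1 : A1t)
    (h : ∀ z1 : Z1t,
      ∑ w1 : W1t, g w1 * cpr P {ω | W1 ω = w1} {ω | Y0 ω = y0 ∧ Z1 ω = z1 ∧ A1 ω = a1}
      = ∑ w1 : W1t, g' w1 * cpr P {ω | W1 ω = w1} {ω | Y0 ω = y0 ∧ Z1 ω = z1 ∧ A1 ω = a1}) :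
    g = g' :=
  eq_of_forall_sum_mul_eq (fun f => hW.one_stage f y0 a1) h

end IsWComplete

namespace IsBridgePair

variable {h22 h22' : Yt → Yt → Yt → W1t → W2t → A1t → A2t → ℝ}
  {h21 h21' : Yt → Yt → Yt → W1t → A1t → A2t → ℝ}

theorem h22_unique (hW : IsWComplete P Y0 Y1 A1 A2 Z1 Z2 W1 W2)
    (h : IsBridgePair P Y0 Y1 Y2 A1 A2 Z1 Z2 W1 W2 h22 h21)
    (h' : IsBridgePair P Y0 Y1 Y2 A1 A2 Z1 Z2 W1 W2 h22' h21') : h22 = h22' := by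
  funext y0 y1 y2 w1 w2 a1 a2
  suffices slice_eq : (fun w : W1t × W2t => h22 y0 y1 y2 w.1 w.2 a1 a2)
      = fun w => h22' y0 y1 y2 w.1 w.2 a1 a2 from congrFun slice_eq (w1, w2)
  refine hW.eq_of_two_stage_sum_eq y0 y1 a1 a2 fun z1 z2 => ?_
  have swap_za : {ω | Y0 ω = y0 ∧ Y1 ω = y1 ∧ Z1 ω = z1 ∧ Z2 ω = z2 ∧ A1 ω = a1 ∧ A2 ω = a2}
      = {ω | Y0 ω = y0 ∧ Y1 ω = y1 ∧ A1 ω = a1 ∧ A2 ω = a2 ∧ Z1 ω = z1 ∧ Z2 ω = z2} :=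
    Set.ext fun ω => by grind
  rw [swap_za]
  exact (h.outcome_eq y0 y1 y2 z1 z2 a1 a2).symm.trans (h'.outcome_eq y0 y1 y2 z1 z2 a1 a2)

theorem h21_unique (hW : IsWComplete P Y0 Y1 A1 A2 Z1 Z2 W1 W2)
    (h : IsBridgePair P Y0 Y1 Y2 A1 A2 Z1 Z2 W1 W2 h22 h21)
    (h' : IsBridgePair P Y0 Y1 Y2 A1 A2 Z1 Z2 W1 W2 h22 h21') : h21 = h21' := by
  funext y0 y1 y2 w1 a1 a2
  suffices slice_eq : (fun w => h21 y0 y1 y2 w a1 a2) = fun w => h21' y0 y1 y2 w a1 a2 from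
    congrFun slice_eq w1
  refine hW.eq_of_one_stage_sum_eq y0 a1 fun z1 => ?_
  have swap_za : {ω | Y0 ω = y0 ∧ Z1 ω = z1 ∧ A1 ω = a1}
      = {ω | Y0 ω = y0 ∧ A1 ω = a1 ∧ Z1 ω = z1} :=
    Set.ext fun ω => and_congr_right' and_comm
  rw [swap_za]
  exact (h.recursion_eq y0 y1 y2 z1 a1 a2).symm.trans (h'.recursion_eq y0 y1 y2 z1 a1 a2)

end IsBridgePair

theorem bridge_functions_unique_general
    {h22 h22' : Yt → Yt → Yt → W1t → W2t → A1t → A2t → ℝ}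
    {h21 h21' : Yt → Yt → Yt → W1t → A1t → A2t → ℝ}
    (hW : IsWComplete P Y0 Y1 A1 A2 Z1 Z2 W1 W2)
    (h : IsBridgePair P Y0 Y1 Y2 A1 A2 Z1 Z2 W1 W2 h22 h21)
    (h' : IsBridgePair P Y0 Y1 Y2 A1 A2 Z1 Z2 W1 W2 h22' h21') :
    h22 = h22' ∧ h21 = h21' := by
  obtain rfl : h22 = h22' := h.h22_unique hW h'
  exact ⟨rfl, h.h21_unique hW h'⟩

end Bridge

/-- Uniqueness of the observed-level bridge functions under W-completeness. -/
theorem bridge_functions_unique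
    {Ω : Type*} [MeasurableSpace Ω] (P : MeasureTheory.Measure Ω)
    [MeasureTheory.IsProbabilityMeasure P]
    {U0t U1t A1t A2t Z1t Z2t W1t W2t : Type*} {Yt : Type*}
    [Fintype U0t] [Nonempty U0t] [Fintype U1t] [Nonempty U1t]
    [Fintype Yt] [Nonempty Yt]
    [Fintype A1t] [Nonempty A1t] [Fintype A2t] [Nonempty A2t]
    [Fintype Z1t] [Nonempty Z1t] [Fintype Z2t] [Nonempty Z2t]
    [Fintype W1t] [Nonempty W1t] [Fintype W2t] [Nonempty W2t]
    (U0 : Ω → U0t) (U1 : Ω → U1t) (Y0 Y1 Y2 : Ω → Yt)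
    (A1 : Ω → A1t) (A2 : Ω → A2t) (Z1 : Ω → Z1t) (Z2 : Ω → Z2t)
    (W1 : Ω → W1t) (W2 : Ω → W2t)
    (hpos : ∀ (u0 : U0t) (u1 : U1t) (y0 y1 y2 : Yt) (a1 : A1t) (a2 : A2t)
        (z1 : Z1t) (z2 : Z2t) (w1 : W1t) (w2 : W2t),
      0 < P {ω | U0 ω = u0 ∧ U1 ω = u1 ∧ Y0 ω = y0 ∧ Y1 ω = y1 ∧ Y2 ω = y2 ∧
        A1 ω = a1 ∧ A2 ω = a2 ∧ Z1 ω = z1 ∧ Z2 ω = z2 ∧ W1 ω = w1 ∧ W2 ω = w2})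
    (hWcomp2 : ∀ (g : W1t × W2t → ℝ) (y0 y1 : Yt) (a1 : A1t) (a2 : A2t),
      (∀ (z1 : Z1t) (z2 : Z2t),
        ∑ w1 : W1t, ∑ w2 : W2t, g (w1, w2) *
          cpr P {ω | W1 ω = w1 ∧ W2 ω = w2}
            {ω | Y0 ω = y0 ∧ Y1 ω = y1 ∧ Z1 ω = z1 ∧ Z2 ω = z2 ∧
              A1 ω = a1 ∧ A2 ω = a2} = 0) →
      ∀ w, g w = 0)
    (hWcomp1 : ∀ (g : W1t → ℝ) (y0 : Yt) (a1 : A1t),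
      (∀ z1 : Z1t,
        ∑ w1 : W1t, g w1 *
          cpr P {ω | W1 ω = w1} {ω | Y0 ω = y0 ∧ Z1 ω = z1 ∧ A1 ω = a1} = 0) →
      ∀ w1, g w1 = 0)
    (h22 : Yt → Yt → Yt → W1t → W2t → A1t → A2t → ℝ)
    (h21 : Yt → Yt → Yt → W1t → A1t → A2t → ℝ)
    (h22' : Yt → Yt → Yt → W1t → W2t → A1t → A2t → ℝ)
    (h21' : Yt → Yt → Yt → W1t → A1t → A2t → ℝ)
    (hob22 : ∀ (y0 y1 y2 : Yt) (z1 : Z1t) (z2 : Z2t) (a1 : A1t) (a2 : A2t),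
      cpr P {ω | Y2 ω = y2}
        {ω | Y0 ω = y0 ∧ Y1 ω = y1 ∧ Z1 ω = z1 ∧ Z2 ω = z2 ∧ A1 ω = a1 ∧ A2 ω = a2}
      = ∑ w1 : W1t, ∑ w2 : W2t, h22 y0 y1 y2 w1 w2 a1 a2 *
          cpr P {ω | W1 ω = w1 ∧ W2 ω = w2}
            {ω | Y0 ω = y0 ∧ Y1 ω = y1 ∧ A1 ω = a1 ∧ A2 ω = a2 ∧ Z1 ω = z1 ∧ Z2 ω = z2})
    (hob21 : ∀ (y0 y1 y2 : Yt) (z1 : Z1t) (a1 : A1t) (a2 : A2t),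
      ∑ w1 : W1t, ∑ w2 : W2t, h22 y0 y1 y2 w1 w2 a1 a2 *
          cpr P {ω | Y1 ω = y1} {ω | Y0 ω = y0 ∧ Z1 ω = z1 ∧ A1 ω = a1} *
          cpr P {ω | W1 ω = w1 ∧ W2 ω = w2}
            {ω | Y0 ω = y0 ∧ Y1 ω = y1 ∧ A1 ω = a1 ∧ Z1 ω = z1}
      = ∑ w1 : W1t, h21 y0 y1 y2 w1 a1 a2 *
          cpr P {ω | W1 ω = w1} {ω | Y0 ω = y0 ∧ A1 ω = a1 ∧ Z1 ω = z1})
    (hob22' : ∀ (y0 y1 y2 : Yt) (z1 : Z1t) (z2 : Z2t) (a1 : A1t) (a2 : A2t),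
      cpr P {ω | Y2 ω = y2}
        {ω | Y0 ω = y0 ∧ Y1 ω = y1 ∧ Z1 ω = z1 ∧ Z2 ω = z2 ∧ A1 ω = a1 ∧ A2 ω = a2}
      = ∑ w1 : W1t, ∑ w2 : W2t, h22' y0 y1 y2 w1 w2 a1 a2 *
          cpr P {ω | W1 ω = w1 ∧ W2 ω = w2}
            {ω | Y0 ω = y0 ∧ Y1 ω = y1 ∧ A1 ω = a1 ∧ A2 ω = a2 ∧ Z1 ω = z1 ∧ Z2 ω = z2})
    (hob21' : ∀ (y0 y1 y2 : Yt) (z1 : Z1t) (a1 : A1t) (a2 : A2t),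
      ∑ w1 : W1t, ∑ w2 : W2t, h22' y0 y1 y2 w1 w2 a1 a2 *
          cpr P {ω | Y1 ω = y1} {ω | Y0 ω = y0 ∧ Z1 ω = z1 ∧ A1 ω = a1} *
          cpr P {ω | W1 ω = w1 ∧ W2 ω = w2}
            {ω | Y0 ω = y0 ∧ Y1 ω = y1 ∧ A1 ω = a1 ∧ Z1 ω = z1}
      = ∑ w1 : W1t, h21' y0 y1 y2 w1 a1 a2 *
          cpr P {ω | W1 ω = w1} {ω | Y0 ω = y0 ∧ A1 ω = a1 ∧ Z1 ω = z1})
    : (∀ (y0 y1 y2 : Yt) (w1 : W1t) (w2 : W2t) (a1 : A1t) (a2 : A2t),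
        h22 y0 y1 y2 w1 w2 a1 a2 = h22' y0 y1 y2 w1 w2 a1 a2) ∧
      (∀ (y0 y1 y2 : Yt) (w1 : W1t) (a1 : A1t) (a2 : A2t),
        h21 y0 y1 y2 w1 a1 a2 = h21' y0 y1 y2 w1 a1 a2) := by
  simpa only [funext_iff] using bridge_functions_unique_general
    ⟨hWcomp2, hWcomp1⟩ ⟨hob22, hob21⟩ ⟨hob22', hob21'⟩
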